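/- Let α ⪰ ω be lattice paths from (0,0) to (n,r) and let Γ(α,ω) be the associated lattice path polymatroid. Then there exists a monomial order ≻ on the monomials of the base ring of Γ(α,ω) under which the symmetric exchange binomials form a Gröbner basis of the toric ideal: for every nonzero f in ker φ, the ≻-leading monomial of f is divisible by the ≻-leading monomial of some symmetric exchange binomial. -/

import Mathlib

/-- A lattice path from `(0,0)` to `(n,r)`, encoded by the set of positions of
its north steps among its `n + r` steps. -/
def IsLatticePath (n r : ℕ) (σ : Finset ℕ) : Prop :=
  σ ⊆ Finset.Icc 1 (n + r) ∧ σ.card = r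

/-- `σ ⪰ τ`: each element of `N(σ)`, in increasing order, is at most the
corresponding element of `N(τ)`. -/
def PathAbove (σ τ : Finset ℕ) : Prop :=
  ∀ k (h1 : k < (σ.sort (· ≤ ·)).length) (h2 : k < (τ.sort (· ≤ ·)).length),
    (σ.sort (· ≤ ·)).get ⟨k, h1⟩ ≤ (τ.sort (· ≤ ·)).get ⟨k, h2⟩

/-- The number of east steps of `σ` before position `a`. -/
def eastBefore (σ : Finset ℕ) (a : ℕ) : ℕ :=
  ((Finset.Icc 1 (a - 1)).filter (fun b => b ∉ σ)).card

/-- The monomial `m(σ)` of a lattice path: the exponent of `x_i` is the number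
of north steps of `σ` along the line `x = i`. -/
noncomputable def pathMonomial (σ : Finset ℕ) : ℕ →₀ ℕ :=
  ∑ a ∈ σ, Finsupp.single (eastBefore σ a) 1

/-- The bases of the lattice path polymatroid `Γ(α, ω)`: the monomials `m(σ)`
for lattice paths `σ` with `α ⪰ σ ⪰ ω`. -/
def IsLPBasis (n r : ℕ) (α ω : Finset ℕ) (m : ℕ →₀ ℕ) : Prop :=
  ∃ σ : Finset ℕ, IsLatticePath n r σ ∧ PathAbove α σ ∧ PathAbove σ ω ∧ m = pathMonomial σ

/-- `nn, nn'` are obtained from `m, m'` by a symmetric exchange, relative to a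
basis predicate `P`. -/
def SymExchP (P : (ℕ →₀ ℕ) → Prop) (m m' nn nn' : ℕ →₀ ℕ) : Prop :=
  P m ∧ P m' ∧ ∃ i j,
    m' i < m i ∧ m j < m' j ∧
    nn = m - Finsupp.single i 1 + Finsupp.single j 1 ∧
    nn' = m' + Finsupp.single i 1 - Finsupp.single j 1 ∧
    P nn ∧ P nn'

/-- The toric map of the collection of bases `P`: sends `Y_m` to the monomial `m`. -/
noncomputable def toricMapP (P : (ℕ →₀ ℕ) → Prop) :
    MvPolynomial {m : ℕ →₀ ℕ // P m} ℂ →ₐ[ℂ] MvPolynomial ℕ ℂ :=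
  MvPolynomial.aeval fun m => MvPolynomial.monomial m.1 1

/-- The set of symmetric exchange binomials. -/
def SEBP (P : (ℕ →₀ ℕ) → Prop) : Set (MvPolynomial {m : ℕ →₀ ℕ // P m} ℂ) :=
  { p | ∃ m m' nn nn' : {m : ℕ →₀ ℕ // P m},
      SymExchP P m.1 m'.1 nn.1 nn'.1 ∧
      p = MvPolynomial.X m * MvPolynomial.X m' - MvPolynomial.X nn * MvPolynomial.X nn' }

/-- A monomial order on the monomials (exponent vectors) of a polynomial ring:
a total order with `M ≻ 1` for `M ≠ 1`, compatible with multiplication. -/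
def IsMonomialOrder {X : Type*} (succ : (X →₀ ℕ) → (X →₀ ℕ) → Prop) : Prop :=
  (∀ M M', M = M' ∨ succ M M' ∨ succ M' M) ∧
  (∀ M, ¬ succ M M) ∧
  (∀ M M' M'', succ M M' → succ M' M'' → succ M M'') ∧
  (∀ M, M ≠ 0 → succ M 0) ∧
  (∀ M M' N, succ M M' → succ (M + N) (M' + N))

/-- `d` is the `succ`-leading monomial of `f`. -/
def IsLeadMonOf {X : Type*} (succ : (X →₀ ℕ) → (X →₀ ℕ) → Prop)
    (f : MvPolynomial X ℂ) (d : X →₀ ℕ) : Prop :=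
  d ∈ f.support ∧ ∀ d' ∈ f.support, d' ≠ d → succ d d'


noncomputable def ps (m : ℕ →₀ ℕ) (t : ℕ) : ℕ := ∑ a ∈ Finset.range t, m a

theorem ps_add (m m' : ℕ →₀ ℕ) (t : ℕ) : ps (m + m') t = ps m t + ps m' t := by
  simp [ps, Finset.sum_add_distrib]

theorem ps_single (i t : ℕ) : ps (Finsupp.single i 1) t = if i < t then 1 else 0 := by
  simp [ps, Finsupp.single_apply]

theorem ps_succ (m : ℕ →₀ ℕ) (t : ℕ) : ps m (t+1) = ps m t + m t := by
  simp [ps, Finset.sum_range_succ]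

theorem ps_mono (m : ℕ →₀ ℕ) : Monotone (ps m) :=
  monotone_nat_of_le_succ fun t => by rw [ps_succ]; omega

theorem ps_inj {m m' : ℕ →₀ ℕ} (h : ∀ t, ps m t = ps m' t) : m = m' := by
  ext t
  have h1 := h (t+1)
  rw [ps_succ, ps_succ, h t] at h1
  omega

noncomputable def qs (N : ℕ) (m : ℕ →₀ ℕ) : ℤ := ∑ t ∈ Finset.range N, (ps m t : ℤ)^2
noncomputable def tsm (N : ℕ) (m : ℕ →₀ ℕ) : ℤ := ∑ t ∈ Finset.range N, (ps m t : ℤ)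
noncomputable def wz (N : ℕ) (m : ℕ →₀ ℕ) : ℤ := 2 * N * qs N m - (tsm N m)^2
noncomputable def wt (N : ℕ) (m : ℕ →₀ ℕ) : ℕ := (wz N m).toNat

theorem wt_cast (N : ℕ) (m : ℕ →₀ ℕ) : (wt N m : ℤ) = wz N m := by
  apply Int.toNat_of_nonneg
  have h := sq_sum_le_card_mul_sum_sq (s := Finset.range N) (f := fun t => (ps m t : ℤ))
  have h2 : 0 ≤ qs N m := Finset.sum_nonneg fun t _ => sq_nonneg _
  rw [Finset.card_range] at h
  have h3 : (0:ℤ) ≤ N * qs N m := by positivity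
  unfold wz tsm
  unfold qs at *
  nlinarith

theorem core_exch (n : ℕ) (P : (ℕ →₀ ℕ) → Prop) (L U : ℕ → ℕ)
    (hP : ∀ m, P m ↔ ∀ t, L t ≤ ps m t ∧ ps m t ≤ U t)
    (x y : ℕ →₀ ℕ) (hx : P x) (hy : P y)
    (hend : ∀ t, n + 1 ≤ t → ps x t = ps y t)
    (t0 : ℕ) (ht0 : ps y t0 < ps x t0)
    (hor : ps y t0 + 2 ≤ ps x t0 ∨ tsm (n+2) x ≤ tsm (n+2) y) :
    ∃ u v, P u ∧ P v ∧ SymExchP P x y u v ∧ x + y = u + v ∧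
      wt (n+2) u + wt (n+2) v < wt (n+2) x + wt (n+2) y := by
  set D : ℕ → ℤ := fun t => (ps x t : ℤ) - ps y t with hD
  have hD0 : D 0 = 0 := by simp [hD, ps]
  have hDe : ∀ t, n + 1 ≤ t → D t = 0 := fun t ht => by simp [hD, hend t ht]
  obtain ⟨tm, htm, hmax⟩ := Finset.exists_max_image (Finset.range (n+2)) D ⟨0, by simp⟩
  have ht0' : t0 < n + 2 := by
    by_contra hc
    have := hend t0 (by omega)
    omega
  have hM0 : D t0 ≤ D tm := hmax t0 (by simpa using ht0')
  have hDt0 : 1 ≤ D t0 := by simp only [hD]; omega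
  obtain ⟨M, hM⟩ : ∃ M, M = D tm := ⟨_, rfl⟩
  have hmax' : ∀ t, D t ≤ M := by
    intro t
    by_cases ht : t < n + 2
    · rw [hM]; exact hmax t (by simpa using ht)
    · rw [hDe t (by omega)]; omega
  have hex1 : ∃ t, D t = M := ⟨tm, hM.symm⟩
  obtain ⟨i1, hi1, hi1'⟩ : ∃ i1, D i1 = M ∧ ∀ t < i1, D t ≠ M :=
    ⟨Nat.find hex1, Nat.find_spec hex1, fun t ht => Nat.find_min hex1 ht⟩
  obtain ⟨i, rfl⟩ : ∃ i, i1 = i + 1 := by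
    cases i1 with
    | zero => omega
    | succ i => exact ⟨i, rfl⟩
  have hi : D i < M := lt_of_le_of_ne (hmax' i) (hi1' i (by omega))
  have hex2 : ∃ t, i + 1 < t ∧ D t < M := ⟨i + n + 2, by omega, by rw [hDe _ (by omega)]; omega⟩
  obtain ⟨j1, ⟨hj1, hj2⟩, hj3⟩ : ∃ j1, (i + 1 < j1 ∧ D j1 < M) ∧ ∀ t < j1, ¬ (i + 1 < t ∧ D t < M) :=
    ⟨Nat.find hex2, Nat.find_spec hex2, fun t ht => Nat.find_min hex2 ht⟩
  obtain ⟨j, rfl⟩ : ∃ j, j1 = j + 1 := ⟨j1 - 1, by omega⟩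
  have hA : ∀ t, i < t → t ≤ j → D t = M := by
    intro t h1 h2
    rcases Nat.lt_or_ge (i+1) t with h | h
    · have := hj3 t (by omega)
      have := hmax' t
      by_contra hc
      exact hj3 t (by omega) ⟨h, by omega⟩
    · have : t = i + 1 := by omega
      rw [this, hi1]
  have hij : i < j := by omega
  have hDj := hA j hij le_rfl
  have hjn : j < n + 2 := by
    by_contra hc
    have := hDe j (by omega)
    omega
  have hxi : y i < x i := by
    have := ps_succ x i; have := ps_succ y i
    simp only [hD] at hi hi1
    omega
  have hxj : x j < y j := by
    have := ps_succ x j; have := ps_succ y j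
    simp only [hD] at hj2 hDj
    omega
  set u := x - Finsupp.single i 1 + Finsupp.single j 1 with hu
  set v := y + Finsupp.single i 1 - Finsupp.single j 1 with hv
  have hu' : u + Finsupp.single i 1 = x + Finsupp.single j 1 := by
    ext a
    simp only [hu, Finsupp.add_apply, Finsupp.tsub_apply, Finsupp.single_apply]
    split_ifs <;> subst_vars <;> omega
  have hv' : v + Finsupp.single j 1 = y + Finsupp.single i 1 := by
    ext a
    simp only [hv, Finsupp.add_apply, Finsupp.tsub_apply, Finsupp.single_apply]
    split_ifs <;> subst_vars <;> omega
  set c : ℕ → ℤ := fun t => if i < t ∧ t ≤ j then 1 else 0 with hc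
  have hpu : ∀ t, (ps u t : ℤ) = ps x t - c t := by
    intro t
    have := congrArg (fun m => ps m t) hu'
    simp only [ps_add, ps_single] at this
    simp only [hc]
    split_ifs at this ⊢ <;> omega
  have hpv : ∀ t, (ps v t : ℤ) = ps y t + c t := by
    intro t
    have := congrArg (fun m => ps m t) hv'
    simp only [ps_add, ps_single] at this
    simp only [hc]
    split_ifs at this ⊢ <;> omega
  have hcD : ∀ t, c t = 0 ∨ (c t = 1 ∧ D t = M) := by
    intro t
    by_cases h : i < t ∧ t ≤ j
    · right; exact ⟨by simp [hc, h], hA t h.1 h.2⟩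
    · left; simp only [hc, if_neg h]
  have hsum : x + y = u + v := by
    have h := congrArg₂ (· + ·) hu' hv'
    ext a
    have h := DFunLike.congr_fun h a
    simp only [Finsupp.add_apply] at h ⊢
    omega
  have hPu : P u := by
    rw [hP] at *
    intro t
    have h1 := hx t; have h2 := hy t; have h3 := hpu t
    rcases hcD t with h | ⟨h, h'⟩
    · omega
    · simp only [hD] at h'; omega
  have hPv : P v := by
    rw [hP] at *
    intro t
    have h1 := hx t; have h2 := hy t; have h3 := hpv t
    rcases hcD t with h | ⟨h, h'⟩
    · omega
    · simp only [hD] at h'; omega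
  refine ⟨u, v, hPu, hPv, ⟨hx, hy, i, j, hxi, hxj, hu, hv, hPu, hPv⟩, hsum, ?_⟩
  zify
  rw [wt_cast, wt_cast, wt_cast, wt_cast]
  obtain ⟨l, hl⟩ : ∃ l, l = ∑ t ∈ Finset.range (n+2), c t := ⟨_, rfl⟩
  have hl1 : 1 ≤ l := by
    rw [hl]
    calc (1:ℤ) = c j := by simp [hc, hij]
      _ ≤ _ := Finset.single_le_sum (f := c) (fun t _ => by
          rcases hcD t with h | h <;> omega) (by simpa using hjn)
  have hTu : tsm (n+2) u = tsm (n+2) x - l := by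
    simp only [tsm, hpu, Finset.sum_sub_distrib, hl]
  have hTv : tsm (n+2) v = tsm (n+2) y + l := by
    simp only [tsm, hpv, Finset.sum_add_distrib, hl]
  have hQ : qs (n+2) u + qs (n+2) v = qs (n+2) x + qs (n+2) y + (2 - 2 * M) * l := by
    simp only [qs, hl, Finset.mul_sum, ← Finset.sum_add_distrib]
    apply Finset.sum_congr rfl
    intro t _
    rw [hpu, hpv]
    rcases hcD t with h | ⟨h, h'⟩
    · rw [h]; ring
    · rw [h, ← h']; simp only [hD]; ring
  have hS : tsm (n+2) x - tsm (n+2) y ≤ (n+2) * M := by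
    simp only [tsm, ← Finset.sum_sub_distrib]
    calc _ ≤ ∑ t ∈ Finset.range (n+2), M := Finset.sum_le_sum fun t _ => hmax' t
      _ = _ := by simp
  have hkey : 2 * ((n:ℤ)+2) * (2 - 2*M) + 2 * (tsm (n+2) x - tsm (n+2) y) - 2 * l < 0 := by
    rcases hor with h | h
    · have hM2 : 2 ≤ M := by
        have : 2 ≤ D t0 := by simp only [hD]; omega
        omega
      nlinarith
    · nlinarith
  have hkey2 := mul_neg_of_pos_of_neg (show (0:ℤ) < l by omega) hkey
  simp only [wz, hTu, hTv]
  push_cast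
  linear_combination hkey2 + 2 * ((n:ℤ)+2) * hQ

def SortedPair (x y : ℕ →₀ ℕ) : Prop :=
  (∀ t, ps y t ≤ ps x t ∧ ps x t ≤ ps y t + 1) ∨ (∀ t, ps x t ≤ ps y t ∧ ps y t ≤ ps x t + 1)

theorem pair_exch (n : ℕ) (P : (ℕ →₀ ℕ) → Prop) (L U : ℕ → ℕ)
    (hP : ∀ m, P m ↔ ∀ t, L t ≤ ps m t ∧ ps m t ≤ U t)
    (x y : ℕ →₀ ℕ) (hx : P x) (hy : P y)
    (hend : ∀ t, n + 1 ≤ t → ps x t = ps y t)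
    (hns : ¬ SortedPair x y) :
    ∃ u v, P u ∧ P v ∧ (SymExchP P x y u v ∨ SymExchP P y x u v) ∧ x + y = u + v ∧
      wt (n+2) u + wt (n+2) v < wt (n+2) x + wt (n+2) y := by
  have A : ∀ t, ps y t < ps x t → (ps y t + 2 ≤ ps x t ∨ tsm (n+2) x ≤ tsm (n+2) y) →
    ∃ u v, P u ∧ P v ∧ (SymExchP P x y u v ∨ SymExchP P y x u v) ∧ x + y = u + v ∧
      wt (n+2) u + wt (n+2) v < wt (n+2) x + wt (n+2) y := by
    intro t h1 h2
    obtain ⟨u, v, a, b, c, d, e⟩ := core_exch n P L U hP x y hx hy hend t h1 h2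
    exact ⟨u, v, a, b, Or.inl c, d, e⟩
  have B : ∀ t, ps x t < ps y t → (ps x t + 2 ≤ ps y t ∨ tsm (n+2) y ≤ tsm (n+2) x) →
    ∃ u v, P u ∧ P v ∧ (SymExchP P x y u v ∨ SymExchP P y x u v) ∧ x + y = u + v ∧
      wt (n+2) u + wt (n+2) v < wt (n+2) x + wt (n+2) y := by
    intro t h1 h2
    obtain ⟨u, v, a, b, c, d, e⟩ := core_exch n P L U hP y x hy hx
      (fun t ht => (hend t ht).symm) t h1 h2
    exact ⟨u, v, a, b, Or.inr c, by rw [add_comm, d], by omega⟩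
  unfold SortedPair at hns
  push Not at hns
  obtain ⟨⟨t, ht⟩, ⟨t', ht'⟩⟩ := hns
  by_cases h1 : ps y t ≤ ps x t
  · exact A t (by have := ht h1; omega) (Or.inl (by have := ht h1; omega))
  by_cases h2 : ps x t' ≤ ps y t'
  · exact B t' (by have := ht' h2; omega) (Or.inl (by have := ht' h2; omega))
  rcases le_total (tsm (n+2) x) (tsm (n+2) y) with h | h
  · exact A t' (by omega) (Or.inr h)
  · exact B t (by omega) (Or.inr h)

theorem ps_path (σ : Finset ℕ) (t : ℕ) :
    ps (pathMonomial σ) t = (σ.filter (fun a => eastBefore σ a < t)).card := by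
  unfold ps pathMonomial
  simp only [Finsupp.finsetSum_apply]
  rw [Finset.sum_comm, Finset.card_filter]
  apply Finset.sum_congr rfl
  intro a _
  exact ps_single _ _

theorem path_key {r : ℕ} (σ : Finset ℕ) (hpos : ∀ a ∈ σ, 1 ≤ a) (h : σ.card = r) (k : Fin r) (t : ℕ) :
    (k : ℕ) < ps (pathMonomial σ) t ↔ σ.orderEmbOfFin h k ≤ k + t := by
  set p := σ.orderEmbOfFin h with hp
  have himg : Finset.image p Finset.univ = σ := Finset.image_orderEmbOfFin_univ σ h
  have hlt : ∀ k : Fin r, (σ.filter (fun a => a < p k)).card = k := by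
    intro k
    conv_lhs => rw [← himg]
    rw [Finset.filter_image, Finset.card_image_of_injective _ p.injective]
    have : (Finset.univ.filter (fun a => p a < p k)) = Finset.Iio k := by
      ext a; simp
    rw [this, Fin.card_Iio]
  have hE : ∀ k : Fin r, eastBefore σ (p k) + k + 1 = p k := by
    intro k
    have h1 := hpos (p k) (Finset.orderEmbOfFin_mem σ h k)
    unfold eastBefore
    have h2 := Finset.card_filter_add_card_filter_not (s := Finset.Icc 1 (p k - 1)) (fun b => b ∈ σ)
    have h3 : (Finset.Icc 1 (p k - 1)).filter (fun b => b ∈ σ) = σ.filter (fun a => a < p k) := by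
      ext b
      simp only [Finset.mem_filter, Finset.mem_Icc]
      constructor
      · rintro ⟨h, h'⟩; exact ⟨h', by omega⟩
      · rintro ⟨h, h'⟩; have := hpos b h; exact ⟨by omega, h⟩
    rw [h3, hlt, Nat.card_Icc] at h2
    omega
  have hmono : ∀ j k : Fin r, j ≤ k → eastBefore σ (p j) ≤ eastBefore σ (p k) := by
    intro j k hjk
    unfold eastBefore
    apply Finset.card_le_card
    apply Finset.filter_subset_filter
    apply Finset.Icc_subset_Icc le_rfl
    have := p.monotone hjk
    omega
  have hcard : ps (pathMonomial σ) t
      = (Finset.univ.filter (fun j : Fin r => eastBefore σ (p j) < t)).card := by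
    rw [ps_path]
    conv_lhs => enter [1]; rw [← himg]
    rw [Finset.filter_image, Finset.card_image_of_injective _ p.injective, himg]
  rw [hcard]
  have hk := hE k
  constructor
  · intro hc
    by_contra hcon
    have : (Finset.univ.filter (fun j : Fin r => eastBefore σ (p j) < t)) ⊆ Finset.Iio k := by
      intro j hj
      simp only [Finset.mem_filter, Finset.mem_univ, true_and] at hj
      rw [Finset.mem_Iio]
      by_contra hjk
      have := hmono k j (not_lt.mp hjk)
      omega
    have := Finset.card_le_card this
    rw [Fin.card_Iio] at this
    omega
  · intro hc
    have : Finset.Iic k ⊆ (Finset.univ.filter (fun j : Fin r => eastBefore σ (p j) < t)) := by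
      intro j hj
      rw [Finset.mem_Iic] at hj
      simp only [Finset.mem_filter, Finset.mem_univ, true_and]
      have := hmono j k hj
      omega
    have := Finset.card_le_card this
    rw [Fin.card_Iic] at this
    omega

theorem ps_path_le {r : ℕ} (σ : Finset ℕ) (h : σ.card = r) (t : ℕ) :
    ps (pathMonomial σ) t ≤ r := by
  rw [ps_path, ← h]; exact Finset.card_filter_le _ _

theorem ps_path_end {n r : ℕ} (σ : Finset ℕ) (h : IsLatticePath n r σ) (t : ℕ) (ht : n + 1 ≤ t) :
    ps (pathMonomial σ) t = r := by
  rw [ps_path, Finset.filter_true_of_mem, h.2]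
  intro a ha
  have h1 : eastBefore σ a ≤ (Finset.Icc 1 (n+r) \ σ).card := by
    apply Finset.card_le_card
    intro b hb
    have := Finset.mem_Icc.mp (h.1 ha)
    simp only [Finset.mem_filter, Finset.mem_Icc, Finset.mem_sdiff] at hb ⊢
    exact ⟨by omega, hb.2⟩
  rw [Finset.card_sdiff_of_subset h.1, h.2, Nat.card_Icc] at h1
  omega

theorem above_iff {r : ℕ} (σ τ : Finset ℕ) (hσ : ∀ a ∈ σ, 1 ≤ a) (hτ : ∀ a ∈ τ, 1 ≤ a)
    (h1 : σ.card = r) (h2 : τ.card = r) :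
    PathAbove σ τ ↔ ∀ t, ps (pathMonomial τ) t ≤ ps (pathMonomial σ) t := by
  have e : PathAbove σ τ ↔ ∀ k : Fin r, σ.orderEmbOfFin h1 k ≤ τ.orderEmbOfFin h2 k := by
    constructor
    · intro h k
      exact h k (by simp [h1]) (by simp [h2])
    · intro h k a b
      exact h ⟨k, by simpa [h1] using a⟩
  rw [e]
  constructor
  · intro h t
    by_contra hc
    have hlt : ps (pathMonomial σ) t < r := lt_of_lt_of_le (not_le.mp hc) (ps_path_le τ h2 t)
    have a := (path_key τ hτ h2 ⟨_, hlt⟩ t).mp (not_le.mp hc)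
    have b := (path_key σ hσ h1 ⟨_, hlt⟩ t).not.mp (lt_irrefl _)
    have := h ⟨_, hlt⟩
    omega
  · intro h k
    have hk : (k : ℕ) + 1 ≤ τ.orderEmbOfFin h2 k ∨ τ.orderEmbOfFin h2 k ≤ k := by omega
    obtain ⟨t, ht⟩ : ∃ t, τ.orderEmbOfFin h2 k = k + t := by
      rcases hk with hk | hk
      · exact ⟨τ.orderEmbOfFin h2 k - k, by omega⟩
      · exfalso
        have := (path_key τ hτ h2 k 0).mpr (by omega)
        simp [ps] at this
    rw [ht]
    rw [← path_key σ hσ h1 k t]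
    exact lt_of_lt_of_le ((path_key τ hτ h2 k t).mpr ht.le) (h t)

theorem path_exists (n r : ℕ) (m : ℕ →₀ ℕ) (hm : ∀ t, n + 1 ≤ t → ps m t = r) :
    ∃ σ, IsLatticePath n r σ ∧ m = pathMonomial σ := by
  classical
  have hex : ∀ k : Fin r, ∃ t, (k : ℕ) < ps m (t+1) := fun k => ⟨n, by rw [hm _ le_rfl]; exact k.2⟩
  obtain ⟨e, he⟩ : ∃ e : Fin r → ℕ, ∀ k t, e k < t ↔ (k : ℕ) < ps m t := by
    refine ⟨fun k => Nat.find (hex k), fun k t => ?_⟩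
    rw [Nat.find_lt_iff]
    constructor
    · rintro ⟨t', h1, h2⟩
      exact lt_of_lt_of_le h2 (ps_mono m h1)
    · intro h
      cases t with
      | zero => simp [ps] at h
      | succ t => exact ⟨t, by omega, h⟩
  have hem : ∀ j k, j ≤ k → e j ≤ e k := by
    intro j k hjk
    have h1 := (he k (e k + 1)).mp (by omega)
    have := (he j (e k + 1)).mpr (lt_of_le_of_lt hjk h1)
    omega
  let p : Fin r → ℕ := fun k => 1 + k + e k
  have hp : StrictMono p := by
    intro j k hjk
    have := hem j k hjk.le
    have : (j : ℕ) < k := hjk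
    simp only [p]; omega
  let σ := Finset.image p Finset.univ
  have hc : σ.card = r := by
    rw [Finset.card_image_of_injective _ hp.injective]; simp
  have hpos : ∀ a ∈ σ, 1 ≤ a := by
    intro a ha
    obtain ⟨k, -, rfl⟩ := Finset.mem_image.mp ha
    simp only [p]; omega
  have hpe : p = σ.orderEmbOfFin hc :=
    Finset.orderEmbOfFin_unique hc (fun k => Finset.mem_image_of_mem _ (Finset.mem_univ _)) hp
  refine ⟨σ, ⟨?_, hc⟩, ?_⟩
  · intro a ha
    obtain ⟨k, -, rfl⟩ := Finset.mem_image.mp ha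
    have := (he k (n+1)).mpr (by rw [hm _ le_rfl]; exact k.2)
    have := k.2
    rw [Finset.mem_Icc]
    simp only [p]; omega
  · have hml : ∀ t, ps m t ≤ r := fun t => by
      rw [← hm (t + n + 1) (by omega)]; exact ps_mono m (by omega)
    have hK : ∀ (k : Fin r) t, (k : ℕ) < ps (pathMonomial σ) t ↔ (k : ℕ) < ps m t := by
      intro k t
      rw [path_key σ hpos hc, ← hpe, ← he]
      simp only [p]; omega
    apply ps_inj
    intro t
    have a := hml t
    have b := ps_path_le σ hc t
    rcases lt_trichotomy (ps m t) (ps (pathMonomial σ) t) with h | h | h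
    · exact absurd ((hK ⟨_, lt_of_lt_of_le h b⟩ t).mp h) (lt_irrefl _)
    · exact h
    · exact absurd ((hK ⟨_, lt_of_lt_of_le h a⟩ t).mpr h) (lt_irrefl _)

theorem basis_iff (n r : ℕ) (α ω : Finset ℕ)
    (hα : IsLatticePath n r α) (hω : IsLatticePath n r ω) (m : ℕ →₀ ℕ) :
    IsLPBasis n r α ω m ↔
      ∀ t, ps (pathMonomial ω) t ≤ ps m t ∧ ps m t ≤ ps (pathMonomial α) t := by
  have pos : ∀ σ, IsLatticePath n r σ → ∀ a ∈ σ, 1 ≤ a :=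
    fun σ h a ha => (Finset.mem_Icc.mp (h.1 ha)).1
  constructor
  · rintro ⟨σ, h1, h2, h3, rfl⟩ t
    exact ⟨(above_iff σ ω (pos _ h1) (pos _ hω) h1.2 hω.2).mp h3 t,
      (above_iff α σ (pos _ hα) (pos _ h1) hα.2 h1.2).mp h2 t⟩
  · intro h
    obtain ⟨σ, h1, rfl⟩ := path_exists n r m (fun t ht => by
      have := h t
      rw [ps_path_end ω hω t ht, ps_path_end α hα t ht] at this
      omega)
    exact ⟨σ, h1, (above_iff α σ (pos _ hα) (pos _ h1) hα.2 h1.2).mpr fun t => (h t).2,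
      (above_iff σ ω (pos _ h1) (pos _ hω) h1.2 hω.2).mpr fun t => (h t).1, rfl⟩

noncomputable def fib {P : (ℕ →₀ ℕ) → Prop} (d : {m : ℕ →₀ ℕ // P m} →₀ ℕ) : ℕ →₀ ℕ :=
  Finsupp.linearCombination ℕ (fun x : {m : ℕ →₀ ℕ // P m} => x.1) d

theorem ps_fib {P : (ℕ →₀ ℕ) → Prop} (d : {m : ℕ →₀ ℕ // P m} →₀ ℕ) (t : ℕ) :
    ps (fib d) t = Finsupp.linearCombination ℕ (fun x : {m : ℕ →₀ ℕ // P m} => ps x.1 t) d := by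
  unfold fib
  induction d using Finsupp.induction_linear with
  | zero => simp [ps]
  | add f g hf hg => rw [map_add, map_add, ps_add, hf, hg]
  | single x k =>
    simp only [Finsupp.linearCombination_single, ps, Finsupp.smul_apply, Finset.smul_sum]

theorem lc_le {X : Type*} (g : X → ℕ) (B : ℕ) (d : X →₀ ℕ) (h : ∀ x ∈ d.support, g x ≤ B) :
    Finsupp.linearCombination ℕ g d ≤ d.degree * B := by
  rw [Finsupp.linearCombination_apply, Finsupp.sum, Finsupp.degree_apply, Finset.sum_mul]
  exact Finset.sum_le_sum fun x hx => Nat.mul_le_mul_left _ (h x hx)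

theorem le_lc {X : Type*} (g : X → ℕ) (B : ℕ) (d : X →₀ ℕ) (h : ∀ x ∈ d.support, B ≤ g x) :
    d.degree * B ≤ Finsupp.linearCombination ℕ g d := by
  rw [Finsupp.linearCombination_apply, Finsupp.sum, Finsupp.degree_apply, Finset.sum_mul]
  exact Finset.sum_le_sum fun x hx => Nat.mul_le_mul_left _ (h x hx)

theorem pull {X : Type*} (d : X →₀ ℕ) (x : X) (hx : x ∈ d.support) :
    ∃ d1 : X →₀ ℕ, d = Finsupp.single x 1 + d1 := by
  refine ⟨d - Finsupp.single x 1, (add_tsub_cancel_of_le ?_).symm⟩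
  rw [Finsupp.single_le_iff]
  have := Finsupp.mem_support_iff.mp hx
  omega

theorem supp_mono {X : Type*} {d1 d : X →₀ ℕ} (h : d1 ≤ d) {x : X} (hx : x ∈ d1.support) :
    x ∈ d.support := Finsupp.support_mono h hx

def SortedD {P : (ℕ →₀ ℕ) → Prop} (d : {m : ℕ →₀ ℕ // P m} →₀ ℕ) : Prop :=
  ∀ x ∈ d.support, ∀ y ∈ d.support, SortedPair x.1 y.1

theorem exists_top {P : (ℕ →₀ ℕ) → Prop} (d : {m : ℕ →₀ ℕ // P m} →₀ ℕ) (hd : SortedD d)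
    (h0 : d ≠ 0) :
    ∃ x ∈ d.support, ∀ y ∈ d.support, ∀ t, ps y.1 t ≤ ps x.1 t ∧ ps x.1 t ≤ ps y.1 t + 1 := by
  obtain ⟨x, hx⟩ := d.support.exists_maximalFor (fun x => ps x.1)
    (Finsupp.support_nonempty_iff.mpr h0)
  refine ⟨x, hx.1, fun y hy t => ?_⟩
  rcases hd x hx.1 y hy with h | h
  · exact h t
  · have h1 : ps y.1 t ≤ ps x.1 t := hx.2 hy (fun t => (h t).1) t
    have h2 := (h t).1
    omega

theorem top_le {P : (ℕ →₀ ℕ) → Prop} (d d' : {m : ℕ →₀ ℕ // P m} →₀ ℕ)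
    (hfib : fib d = fib d') (hdeg : d.degree = d'.degree)
    (x x' : {m : ℕ →₀ ℕ // P m})
    (hx : ∀ y ∈ d.support, ∀ t, ps y.1 t ≤ ps x.1 t)
    (hx's : x' ∈ d'.support)
    (hx' : ∀ y ∈ d'.support, ∀ t, ps x'.1 t ≤ ps y.1 t + 1) (t : ℕ) :
    ps x'.1 t ≤ ps x.1 t := by
  by_contra hc
  have h1 := lc_le (fun x : {m : ℕ →₀ ℕ // P m} => ps x.1 t) (ps x.1 t) d (fun y hy => hx y hy t)
  have h2 : ps (fib d) t = ps (fib d') t := by rw [hfib]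
  rw [ps_fib, ps_fib] at h2
  obtain ⟨d1, rfl⟩ := pull d' x' hx's
  have h3 := le_lc (fun x : {m : ℕ →₀ ℕ // P m} => ps x.1 t) (ps x.1 t) d1 (fun y hy => by
    have := hx' y (supp_mono le_add_self hy) t
    omega)
  rw [map_add, Finsupp.linearCombination_single, one_smul] at h2
  rw [map_add, Finsupp.degree_single] at hdeg
  rw [hdeg, add_mul, one_mul] at h1
  omega

theorem sorted_unique {P : (ℕ →₀ ℕ) → Prop} (k : ℕ) : ∀ (d d' : {m : ℕ →₀ ℕ // P m} →₀ ℕ),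
    SortedD d → SortedD d' → fib d = fib d' → d.degree = k → d'.degree = k → d = d' := by
  induction k with
  | zero =>
    intro d d' _ _ _ h1 h2
    rw [Finsupp.degree_eq_zero_iff] at h1 h2
    rw [h1, h2]
  | succ k ih =>
    intro d d' hs hs' hf h1 h2
    obtain ⟨x, hx, hxt⟩ := exists_top d hs (by rintro rfl; simp at h1)
    obtain ⟨x', hx', hxt'⟩ := exists_top d' hs' (by rintro rfl; simp at h2)
    have hxx : x = x' := by
      apply Subtype.ext
      apply ps_inj
      intro t
      exact le_antisymm
        (top_le d' d hf.symm (by rw [h1, h2]) x' x (fun y hy t => (hxt' y hy t).1) hx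
          (fun y hy t => (hxt y hy t).2) t)
        (top_le d d' hf (by rw [h1, h2]) x x' (fun y hy t => (hxt y hy t).1) hx'
          (fun y hy t => (hxt' y hy t).2) t)
    subst hxx
    obtain ⟨d1, rfl⟩ := pull d x hx
    obtain ⟨d1', rfl⟩ := pull d' x hx'
    rw [map_add, Finsupp.degree_single] at h1 h2
    congr 1
    apply ih
    · exact fun a ha b hb => hs a (supp_mono le_add_self ha) b (supp_mono le_add_self hb)
    · exact fun a ha b hb => hs' a (supp_mono le_add_self ha) b (supp_mono le_add_self hb)
    · unfold fib at hf ⊢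
      rw [map_add, map_add] at hf
      exact add_left_cancel hf
    · omega
    · omega

noncomputable def wtot (N : ℕ) {P : (ℕ →₀ ℕ) → Prop} (d : {m : ℕ →₀ ℕ // P m} →₀ ℕ) : ℕ :=
  Finsupp.linearCombination ℕ (fun x : {m : ℕ →₀ ℕ // P m} => wt N x.1) d

theorem wtot_add (N : ℕ) {P : (ℕ →₀ ℕ) → Prop} (d e : {m : ℕ →₀ ℕ // P m} →₀ ℕ) :
    wtot N (d + e) = wtot N d + wtot N e := map_add _ _ _

theorem fib_add {P : (ℕ →₀ ℕ) → Prop} (d e : {m : ℕ →₀ ℕ // P m} →₀ ℕ) :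
    fib (d + e) = fib d + fib e := map_add _ _ _

theorem wtot_single (N : ℕ) {P : (ℕ →₀ ℕ) → Prop} (x : {m : ℕ →₀ ℕ // P m}) :
    wtot N (Finsupp.single x 1) = wt N x.1 := by simp [wtot]

theorem fib_single {P : (ℕ →₀ ℕ) → Prop} (x : {m : ℕ →₀ ℕ // P m}) :
    fib (Finsupp.single x 1) = x.1 := by simp [fib]

theorem sortedPair_self (x : ℕ →₀ ℕ) : SortedPair x x := Or.inl fun t => by omega

theorem unsorted_exch (n : ℕ) (P : (ℕ →₀ ℕ) → Prop) (L U : ℕ → ℕ)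
    (hP : ∀ m, P m ↔ ∀ t, L t ≤ ps m t ∧ ps m t ≤ U t)
    (hLU : ∀ t, n + 1 ≤ t → L t = U t) (d : {m : ℕ →₀ ℕ // P m} →₀ ℕ) (hd : ¬ SortedD d) :
    ∃ x y u v : {m : ℕ →₀ ℕ // P m}, Finsupp.single x 1 + Finsupp.single y 1 ≤ d ∧
      SymExchP P x.1 y.1 u.1 v.1 ∧ x.1 + y.1 = u.1 + v.1 ∧
      wt (n+2) u.1 + wt (n+2) v.1 < wt (n+2) x.1 + wt (n+2) y.1 := by
  have hend : ∀ x y : {m : ℕ →₀ ℕ // P m}, ∀ t, n + 1 ≤ t → ps x.1 t = ps y.1 t := by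
    intro x y t ht
    have h1 := (hP _).mp x.2 t
    have h2 := (hP _).mp y.2 t
    have h3 := hLU t ht
    omega
  unfold SortedD at hd
  push Not at hd
  obtain ⟨x, hx, y, hy, hxy⟩ := hd
  have hne : x ≠ y := by
    rintro rfl
    exact hxy (sortedPair_self _)
  have hle : Finsupp.single x 1 + Finsupp.single y 1 ≤ d := by
    classical
    intro a
    have h1 := Finsupp.mem_support_iff.mp hx
    have h2 := Finsupp.mem_support_iff.mp hy
    simp only [Finsupp.add_apply, Finsupp.single_apply]
    split_ifs with h3 h4 h4
    · exact absurd (h3.trans h4.symm) hne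
    · subst h3; omega
    · subst h4; omega
    · omega
  obtain ⟨u, v, hu, hv, hs, he, hw⟩ := pair_exch n P L U hP x.1 y.1 x.2 y.2 (hend x y) hxy
  rcases hs with hs | hs
  · exact ⟨x, y, ⟨u, hu⟩, ⟨v, hv⟩, hle, hs, he, hw⟩
  · exact ⟨y, x, ⟨u, hu⟩, ⟨v, hv⟩, by rwa [add_comm], hs, by rw [add_comm, he],
      by simp only at hw ⊢; omega⟩

theorem descend (n : ℕ) (P : (ℕ →₀ ℕ) → Prop) (L U : ℕ → ℕ)
    (hP : ∀ m, P m ↔ ∀ t, L t ≤ ps m t ∧ ps m t ≤ U t)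
    (hLU : ∀ t, n + 1 ≤ t → L t = U t) (w : ℕ) : ∀ d : {m : ℕ →₀ ℕ // P m} →₀ ℕ,
    wtot (n+2) d = w → ∃ e, SortedD e ∧ fib e = fib d ∧ (e = d ∨ wtot (n+2) e < wtot (n+2) d) := by
  induction w using Nat.strong_induction_on with
  | _ w ih =>
    intro d hw
    by_cases hd : SortedD d
    · exact ⟨d, hd, rfl, Or.inl rfl⟩
    obtain ⟨x, y, u, v, hle, -, hsum, hlt⟩ := unsorted_exch n P L U hP hLU d hd
    obtain ⟨c, rfl⟩ := exists_add_of_le hle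
    have h1 : wtot (n+2) (Finsupp.single u 1 + Finsupp.single v 1 + c) <
        wtot (n+2) (Finsupp.single x 1 + Finsupp.single y 1 + c) := by
      simp only [wtot_add, wtot_single]; omega
    obtain ⟨e, h2, h3, h4⟩ := ih _ (hw ▸ h1) _ rfl
    refine ⟨e, h2, ?_, Or.inr ?_⟩
    · rw [h3]
      simp only [fib_add, fib_single, hsum]
    · rcases h4 with h4 | h4
      · rw [h4]; exact h1
      · exact h4.trans h1

theorem toric_monomial (P : (ℕ →₀ ℕ) → Prop) (d : {m : ℕ →₀ ℕ // P m} →₀ ℕ) (c : ℂ) :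
    toricMapP P (MvPolynomial.monomial d c) = MvPolynomial.monomial (fib d) c := by
  unfold toricMapP fib
  rw [MvPolynomial.aeval_monomial, Finsupp.linearCombination_apply]
  simp only [MvPolynomial.monomial_pow, one_pow]
  rw [Finsupp.prod, ← MvPolynomial.monomial_sum_one, MvPolynomial.algebraMap_eq,
    MvPolynomial.C_mul_monomial, mul_one]
  rfl

theorem ker_other (P : (ℕ →₀ ℕ) → Prop) (f : MvPolynomial {m : ℕ →₀ ℕ // P m} ℂ)
    (hf : f ∈ RingHom.ker (toricMapP P)) (d : {m : ℕ →₀ ℕ // P m} →₀ ℕ) (hd : d ∈ f.support) :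
    ∃ d' ∈ f.support, d' ≠ d ∧ fib d' = fib d := by
  classical
  by_contra hc
  push Not at hc
  have h0 : toricMapP P f = 0 := hf
  rw [f.as_sum, map_sum] at h0
  have h1 := congrArg (MvPolynomial.coeff (fib d)) h0
  simp only [toric_monomial, MvPolynomial.coeff_sum, MvPolynomial.coeff_monomial,
    MvPolynomial.coeff_zero] at h1
  rw [Finset.sum_eq_single_of_mem d hd (fun b hb hne => if_neg (hc b hb hne)), if_pos rfl] at h1
  exact MvPolynomial.mem_support_iff.mp hd h1

theorem lead_binom {X : Type*} (succ : (X →₀ ℕ) → (X →₀ ℕ) → Prop) (x y u v : X)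
    (hirr : ∀ M, ¬ succ M M)
    (h : succ (Finsupp.single x 1 + Finsupp.single y 1) (Finsupp.single u 1 + Finsupp.single v 1)) :
    IsLeadMonOf succ (MvPolynomial.X x * MvPolynomial.X y - MvPolynomial.X u * MvPolynomial.X v)
      (Finsupp.single x 1 + Finsupp.single y 1) := by
  classical
  have hne : Finsupp.single u 1 + Finsupp.single v 1 ≠
      (Finsupp.single x 1 + Finsupp.single y 1 : X →₀ ℕ) := fun he => by
    rw [he] at h; exact hirr _ h
  have e : ∀ a b : X, (MvPolynomial.X a * MvPolynomial.X b : MvPolynomial X ℂ) =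
      MvPolynomial.monomial (Finsupp.single a 1 + Finsupp.single b 1) 1 := by
    intro a b
    simp [MvPolynomial.X, MvPolynomial.monomial_mul]
  rw [e, e]
  constructor
  · rw [MvPolynomial.mem_support_iff, MvPolynomial.coeff_sub, MvPolynomial.coeff_monomial,
      MvPolynomial.coeff_monomial, if_pos rfl, if_neg hne]
    simp
  · intro d' hd' hne'
    rw [MvPolynomial.mem_support_iff, MvPolynomial.coeff_sub, MvPolynomial.coeff_monomial,
      MvPolynomial.coeff_monomial, if_neg (Ne.symm hne')] at hd'
    split_ifs at hd' with h1
    · rwa [← h1]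
    · simp at hd'

theorem exists_order {X : Type*} (W : (X →₀ ℕ) → ℕ) (h0 : W 0 = 0)
    (hadd : ∀ a b, W (a + b) = W a + W b) :
    ∃ succ : (X →₀ ℕ) → (X →₀ ℕ) → Prop, IsMonomialOrder succ ∧
      (∀ M M', W M' < W M → succ M M') ∧
      ∀ S : Finset (X →₀ ℕ), S.Nonempty → ∃ d ∈ S, ∀ d' ∈ S, d' ≠ d → succ d d' := by
  classical
  let _ : LinearOrder X := linearOrderOfSTO WellOrderingRel
  let K : (X →₀ ℕ) → ℕ ×ₗ Lex (X →₀ ℕ) := fun d => toLex (W d, toLex d)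
  have hKlt : ∀ a b, K a < K b ↔ W a < W b ∨ (W a = W b ∧ toLex a < toLex b) := by
    intro a b
    simp only [K, Prod.Lex.toLex_lt_toLex]
  have hKinj : ∀ a b, K a = K b → a = b := by
    intro a b h
    have h := congrArg ofLex h
    simp only [K, ofLex_toLex, Prod.mk.injEq] at h
    exact toLex.injective h.2
  refine ⟨fun M M' => K M' < K M, ⟨?_, ?_, ?_, ?_, ?_⟩, ?_, ?_⟩
  · intro M M'
    rcases lt_trichotomy (K M) (K M') with h | h | h
    · exact Or.inr (Or.inr h)
    · exact Or.inl (hKinj _ _ h)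
    · exact Or.inr (Or.inl h)
  · exact fun M => lt_irrefl _
  · exact fun M M' M'' h h' => h'.trans h
  · intro M hM
    rw [hKlt]
    rw [h0]
    rcases Nat.eq_zero_or_pos (W M) with h | h
    · right
      refine ⟨h.symm, ?_⟩
      exact lt_of_le_of_ne (Finsupp.toLex_monotone zero_le)
        (fun h => hM (toLex.injective h).symm)
    · exact Or.inl h
  · intro M M' N h
    rw [hKlt] at h ⊢
    rw [hadd, hadd]
    rcases h with h | ⟨h, h'⟩
    · left; omega
    · right
      refine ⟨by omega, ?_⟩
      rw [toLex_add, toLex_add]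
      exact add_lt_add_left h' _
  · exact fun M M' h => (hKlt _ _).mpr (Or.inl h)
  · intro S hS
    obtain ⟨d, hd, hmax⟩ := Finset.exists_max_image S K hS
    exact ⟨d, hd, fun d' hd' hne =>
      lt_of_le_of_ne (hmax d' hd') (fun h => hne (hKinj _ _ h))⟩

theorem main_order (n r : ℕ) (hr : 0 < r) (P : (ℕ →₀ ℕ) → Prop) (L U : ℕ → ℕ)
    (hP : ∀ m, P m ↔ ∀ t, L t ≤ ps m t ∧ ps m t ≤ U t)
    (hL : ∀ t, n + 1 ≤ t → L t = r) (hU : ∀ t, n + 1 ≤ t → U t = r) :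
    ∃ succ : ({m : ℕ →₀ ℕ // P m} →₀ ℕ) → ({m : ℕ →₀ ℕ // P m} →₀ ℕ) → Prop,
      IsMonomialOrder succ ∧
      ∀ f : MvPolynomial {m : ℕ →₀ ℕ // P m} ℂ,
        f ∈ RingHom.ker (toricMapP P) → f ≠ 0 →
          ∃ d, IsLeadMonOf succ f d ∧
            ∃ g ∈ SEBP P, ∃ e, IsLeadMonOf succ g e ∧ e ≤ d := by
  have hLU : ∀ t, n + 1 ≤ t → L t = U t := fun t ht => by rw [hL t ht, hU t ht]
  obtain ⟨succ, hord, hW, hS⟩ := exists_order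
    (fun d : {m : ℕ →₀ ℕ // P m} →₀ ℕ => wtot (n+2) d) (map_zero _) (wtot_add (n+2))
  refine ⟨succ, hord, ?_⟩
  · intro f hf hf0
    obtain ⟨d, hd, hmax⟩ := hS f.support (MvPolynomial.support_nonempty.mpr hf0)
    refine ⟨d, ⟨hd, hmax⟩, ?_⟩
    obtain ⟨d', hd', hne, hfib⟩ := ker_other P f hf d hd
    have hlt : succ d d' := hmax d' hd' hne
    have hdeg : ∀ e : {m : ℕ →₀ ℕ // P m} →₀ ℕ, ps (fib e) (n+1) = e.degree * r := by
      intro e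
      rw [ps_fib]
      have hx : ∀ x : {m : ℕ →₀ ℕ // P m}, ps x.1 (n+1) = r := by
        intro x
        have := (hP _).mp x.2 (n+1)
        rw [hL _ le_rfl, hU _ le_rfl] at this
        omega
      exact le_antisymm (lc_le _ r e fun x _ => (hx x).le) (le_lc _ r e fun x _ => (hx x).ge)
    have hns : ¬ SortedD d := by
      intro hs
      obtain ⟨e, h1, h2, h3⟩ := descend n P L U hP hLU _ d' rfl
      have h4 : fib e = fib d := h2.trans hfib
      have h5 : e.degree = d.degree := by
        apply Nat.eq_of_mul_eq_mul_right hr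
        rw [← hdeg, ← hdeg, h4]
      have h6 : e = d := sorted_unique _ e d h1 hs h4 h5 rfl
      subst h6
      rcases h3 with h3 | h3
      · exact hne h3.symm
      · exact hord.2.1 _ (hord.2.2.1 _ _ _ hlt (hW _ _ h3))
    obtain ⟨x, y, u, v, hle, hsym, -, hw⟩ := unsorted_exch n P L U hP hLU d hns
    refine ⟨_, ⟨x, y, u, v, hsym, rfl⟩, _, lead_binom _ x y u v hord.2.1 ?_, hle⟩
    apply hW
    simpa only [wtot_add, wtot_single] using hw

/-- There is a monomial order on the base ring of a lattice path polymatroid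
under which the symmetric exchange binomials form a Gröbner basis of the toric
ideal. -/
theorem stmt5 (n r : ℕ) (hn : 0 < n) (hr : 0 < r) (α ω : Finset ℕ)
    (hα : IsLatticePath n r α) (hω : IsLatticePath n r ω) (hαω : PathAbove α ω) :
    ∃ succ : ({m : ℕ →₀ ℕ // IsLPBasis n r α ω m} →₀ ℕ) →
        ({m : ℕ →₀ ℕ // IsLPBasis n r α ω m} →₀ ℕ) → Prop,
      IsMonomialOrder succ ∧
      ∀ f : MvPolynomial {m : ℕ →₀ ℕ // IsLPBasis n r α ω m} ℂ,
        f ∈ RingHom.ker (toricMapP (IsLPBasis n r α ω)) → f ≠ 0 →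
          ∃ d, IsLeadMonOf succ f d ∧
            ∃ g ∈ SEBP (IsLPBasis n r α ω), ∃ e, IsLeadMonOf succ g e ∧ e ≤ d := by
  exact main_order n r hr _ _ _ (basis_iff n r α ω hα hω) (ps_path_end ω hω) (ps_path_end α hα)
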